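/- arXiv:1607.08496 — 3 statements merged into one kernel-verified Lean document; each statement's English description precedes it below -/
import Mathlib

section
/- Let G be a finite simple graph and K_m the complete graph on m vertices. Then the connected set polynomial of the lexicographic product G·K_m satisfies C(G·K_m; x) = C(G; (x+1)^m − 1) for all complex x. -/
open scoped Classical

/-- The number of connected sets (nonempty vertex subsets inducing a connected
subgraph) of order `k` in the finite simple graph `G`. -/
noncomputable def connCount {V : Type*} [Fintype V] (G : SimpleGraph V) (k : ℕ) : ℕ :=
  (Finset.univ.filter fun S : Finset V =>
    S.card = k ∧ (G.induce (S : Set V)).Connected).card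

/-- The connected set polynomial `C(G;x) = ∑_{k=1}^n c_k x^k`, at a complex argument. -/
noncomputable def connPoly {V : Type*} [Fintype V] (G : SimpleGraph V) (x : ℂ) : ℂ :=
  ∑ k ∈ Finset.Icc 1 (Fintype.card V), (connCount G k : ℂ) * x ^ k

/-- The lexicographic product of two simple graphs: `(u,x)` and `(v,y)` are adjacent iff
`u ~ v` in `G`, or `u = v` and `x ~ y` in `H`. -/
def lexProd {α β : Type*} (G : SimpleGraph α) (H : SimpleGraph β) :
    SimpleGraph (α × β) where
  Adj p q := G.Adj p.1 q.1 ∨ (p.1 = q.1 ∧ H.Adj p.2 q.2)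
  symm := by
    refine ⟨?_⟩
    rintro p q (h | ⟨h1, h2⟩)
    · exact Or.inl h.symm
    · exact Or.inr ⟨h1.symm, h2.symm⟩
  loopless := by
    refine ⟨?_⟩
    rintro p (h | ⟨-, h⟩)
    · exact G.loopless.irrefl _ h
    · exact H.loopless.irrefl _ h

/-!
A set `T` of vertices of `G · K_m` is connected exactly when its projection to `G` is, because the
fibres of the projection are cliques and adjacency between distinct fibres is read off in `G`. Give
`T` the weight `x ^ |T|`; it suffices that the sets projecting onto a given `S` have total weight
`((x + 1) ^ m - 1) ^ |S|`. The sets projecting into `S` are the subsets of `S × K_m`, of total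
weight `(x + 1) ^ (m |S|) = ∑_{A ⊆ S} ((x + 1) ^ m - 1) ^ |A|`, and Möbius inversion over the
subsets of `S` isolates the sets projecting onto `S`.
-/

section Connectivity

variable {V W : Type*} {G : SimpleGraph V} {H : SimpleGraph W} {f : V → W}

theorem reachable_map_of_adj_imp_reachable (hf : ∀ a b, G.Adj a b → H.Reachable (f a) (f b))
    {a b : V} (hab : G.Reachable a b) : H.Reachable (f a) (f b) := by
  simp only [SimpleGraph.reachable_iff_reflTransGen] at hf hab ⊢
  exact hab.lift' f hf

theorem connected_of_surjective_of_adj_imp_reachable (hsurj : f.Surjective)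
    (hf : ∀ a b, G.Adj a b → H.Reachable (f a) (f b)) (hG : G.Connected) : H.Connected := by
  have : Nonempty W := hG.nonempty.map f
  refine .mk (hsurj.forall₂.2 fun a b => ?_)
  exact reachable_map_of_adj_imp_reachable hf (hG.preconnected a b)

theorem connected_iff_of_surjective_of_reachable_fiber (hsurj : f.Surjective)
    (hfiber : ∀ a b, f a = f b → G.Reachable a b)
    (hmap : ∀ a b, G.Adj a b → H.Reachable (f a) (f b))
    (hlift : ∀ a b, H.Adj (f a) (f b) → G.Reachable a b) :
    G.Connected ↔ H.Connected := by
  refine ⟨connected_of_surjective_of_adj_imp_reachable hsurj hmap, fun hH => ?_⟩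
  obtain ⟨s, hs⟩ := hsurj.hasRightInverse
  have hsection (u v : W) (huv : H.Adj u v) : G.Reachable (s u) (s v) :=
    hlift _ _ (by rwa [hs, hs])
  have : Nonempty V := hH.nonempty.map s
  refine .mk fun a b => ?_
  have hmiddle : G.Reachable (s (f a)) (s (f b)) :=
    reachable_map_of_adj_imp_reachable hsection (hH.preconnected (f a) (f b))
  exact (hfiber _ _ (hs (f a)).symm).trans (hmiddle.trans (hfiber _ _ (hs (f b))))

theorem connected_induce_lexProd_iff_of_preconnected_fiber {T : Set (V × W)}
    (hT : ∀ a, (H.induce {b | (a, b) ∈ T}).Preconnected) :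
    ((lexProd G H).induce T).Connected ↔ (G.induce (Prod.fst '' T)).Connected := by
  refine connected_iff_of_surjective_of_reachable_fiber (f := T.imageFactorization Prod.fst)
    Set.imageFactorization_surjective ?_ ?_ ?_
  · rintro ⟨⟨a, i⟩, hp⟩ ⟨⟨b, j⟩, hq⟩ hab
    obtain rfl : a = b := congrArg Subtype.val hab
    refine reachable_map_of_adj_imp_reachable
      (f := fun b : {b | (a, b) ∈ T} => (⟨(a, b), b.2⟩ : T)) (fun b c hbc => ?_)
      (hT a ⟨i, hp⟩ ⟨j, hq⟩)
    exact SimpleGraph.Adj.reachable (Or.inr ⟨rfl, hbc⟩)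
  · rintro p q (hadj | ⟨heq, -⟩)
    · exact SimpleGraph.Adj.reachable hadj
    · rw [show T.imageFactorization Prod.fst p = T.imageFactorization Prod.fst q from
        Subtype.ext heq]
  · exact fun p q hadj => SimpleGraph.Adj.reachable (Or.inl hadj)

theorem connected_induce_lexProd_top_iff {T : Set (V × W)} :
    ((lexProd G (⊤ : SimpleGraph W)).induce T).Connected ↔
      (G.induce (Prod.fst '' T)).Connected := by
  refine connected_induce_lexProd_iff_of_preconnected_fiber fun a => ?_
  rw [SimpleGraph.induce_top]
  exact SimpleGraph.preconnected_top

end Connectivity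

section FiberSums

theorem eq_of_forall_sum_Iic_eq {P R : Type*} [PartialOrder P] [LocallyFiniteOrder P]
    [OrderBot P] [Ring R] {f g : P → R}
    (h : ∀ x, ∑ y ∈ Finset.Iic x, f y = ∑ y ∈ Finset.Iic x, g y) : f = g := by
  funext x
  rw [IncidenceAlgebra.moebius_inversion_bot f _ fun _ => rfl,
    IncidenceAlgebra.moebius_inversion_bot g _ fun _ => rfl]
  simp only [h]

theorem sum_prod_of_image_eq {V α R : Type*} [Fintype V] [CommRing R] (f : V → α) (w : V → R)
    (S : Finset α) :
    ∑ T : Finset V with T.image f = S, ∏ v ∈ T, w v =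
      ∏ a ∈ S, (∏ v with f v = a, (w v + 1) - 1) := by
  suffices h : (fun S => ∑ T : Finset V with T.image f = S, ∏ v ∈ T, w v) =
      fun S => ∏ a ∈ S, (∏ v with f v = a, (w v + 1) - 1) from congrFun h S
  refine eq_of_forall_sum_Iic_eq fun S => ?_
  have hpreimage : ({T : Finset V | T.image f ∈ S.powerset} : Finset (Finset V)) =
      ({v | f v ∈ S} : Finset V).powerset := by
    ext T
    simp [Finset.subset_iff]
  rw [Finset.Iic_eq_powerset]
  calc ∑ A ∈ S.powerset, ∑ T : Finset V with T.image f = A, ∏ v ∈ T, w v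
      = ∑ T : Finset V with T.image f ∈ S.powerset, ∏ v ∈ T, w v :=
        Finset.sum_fiberwise_eq_sum_filter ..
    _ = ∑ T ∈ ({v | f v ∈ S} : Finset V).powerset, ∏ v ∈ T, w v := by rw [hpreimage]
    _ = ∏ v with f v ∈ S, (w v + 1) := (Finset.prod_add_one _).symm
    _ = ∏ a ∈ S, ∏ v with f v = a, (w v + 1) :=
        (Finset.prod_fiberwise_eq_prod_filter ..).symm
    _ = ∏ a ∈ S, ((∏ v with f v = a, (w v + 1) - 1) + 1) := by simp only [sub_add_cancel]
    _ = ∑ A ∈ S.powerset, ∏ a ∈ A, (∏ v with f v = a, (w v + 1) - 1) := Finset.prod_add_one _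

theorem sum_pow_card_of_image_fst_eq {α β R : Type*} [Fintype α] [Fintype β] [CommRing R]
    (S : Finset α) (x : R) :
    ∑ T : Finset (α × β) with T.image Prod.fst = S, x ^ T.card =
      ((x + 1) ^ Fintype.card β - 1) ^ S.card := by
  have hfiber (a : α) : ({p | p.1 = a} : Finset (α × β)) = {a} ×ˢ Finset.univ := by
    ext p
    simp [-Finset.singleton_product]
  simpa [hfiber, -Finset.singleton_product] using
    sum_prod_of_image_eq (Prod.fst : α × β → α) (fun _ => x) S

end FiberSums

section ConnectedSets

variable {V : Type*} [Fintype V]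

/-- The connected sets of `G`, over which `connPoly G x` sums `x ^ |S|`. -/
noncomputable def connectedSets (G : SimpleGraph V) : Finset (Finset V) :=
  {S : Finset V | (G.induce (S : Set V)).Connected}

theorem mem_connectedSets {G : SimpleGraph V} {S : Finset V} :
    S ∈ connectedSets G ↔ (G.induce (S : Set V)).Connected :=
  Finset.mem_filter_univ S

theorem connPoly_eq_sum_connectedSets (G : SimpleGraph V) (x : ℂ) :
    connPoly G x = ∑ S ∈ connectedSets G, x ^ S.card := by
  have hcard (S : Finset V) (hS : S ∈ connectedSets G) :
      S.card ∈ Finset.Icc 1 (Fintype.card V) := by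
    obtain ⟨v⟩ := (mem_connectedSets.1 hS).nonempty
    exact Finset.mem_Icc.2 ⟨Finset.card_pos.2 ⟨v, v.2⟩, S.card_le_univ⟩
  rw [connPoly, ← Finset.sum_fiberwise_of_maps_to' hcard]
  refine Finset.sum_congr rfl fun k _ => ?_
  rw [Finset.sum_const, nsmul_eq_mul, connCount, connectedSets, Finset.filter_filter]
  simp only [and_comm]

theorem mem_connectedSets_lexProd_top_iff {α β : Type*} [Fintype α] [Fintype β]
    {G : SimpleGraph α} {T : Finset (α × β)} :
    T ∈ connectedSets (lexProd G (⊤ : SimpleGraph β)) ↔ T.image Prod.fst ∈ connectedSets G := by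
  rw [mem_connectedSets, mem_connectedSets, Finset.coe_image, connected_induce_lexProd_top_iff]

end ConnectedSets

theorem connPoly_lexProd_complete_general {α β : Type*} [Fintype α] [Fintype β]
    (G : SimpleGraph α) (x : ℂ) :
    connPoly (lexProd G (⊤ : SimpleGraph β)) x =
      connPoly G ((x + 1) ^ Fintype.card β - 1) := by
  calc connPoly (lexProd G (⊤ : SimpleGraph β)) x
      = ∑ T ∈ connectedSets (lexProd G (⊤ : SimpleGraph β)), x ^ T.card :=
        connPoly_eq_sum_connectedSets _ x
    _ = ∑ T : Finset (α × β) with T.image Prod.fst ∈ connectedSets G, x ^ T.card := by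
        simp only [← mem_connectedSets_lexProd_top_iff, Finset.filter_univ_mem]
    _ = ∑ S ∈ connectedSets G, ∑ T : Finset (α × β) with T.image Prod.fst = S, x ^ T.card :=
        (Finset.sum_fiberwise_eq_sum_filter ..).symm
    _ = ∑ S ∈ connectedSets G, ((x + 1) ^ Fintype.card β - 1) ^ S.card := by
        simp only [sum_pow_card_of_image_fst_eq]
    _ = connPoly G ((x + 1) ^ Fintype.card β - 1) := (connPoly_eq_sum_connectedSets G _).symm

/-- The connected set polynomial of the lexicographic product with a complete graph:
`C(G*K_m;x) = C(G;(x+1)^m-1)`. -/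
theorem connPoly_lexProd_complete {α : Type*} [Fintype α] (G : SimpleGraph α) (m : ℕ)
    (x : ℂ) :
    connPoly (lexProd G (⊤ : SimpleGraph (Fin m))) x =
      connPoly G ((x + 1) ^ m - 1) := by
  rw [connPoly_lexProd_complete_general, Fintype.card_fin]
end

section
/- For the complete bipartite graph K_{n,n} (n ≥ 1) and every real or complex p, the node reliability polynomial satisfies NRel(K_{n,n}; p) = 2np(1−p)^{2n−1} + (1 − (1−p)^n)². -/
open scoped Classical

/-- The node reliability polynomial of `G` at a complex argument `p`: the sum over all
connected sets `S` of `p^|S| * (1-p)^(N-|S|)`. -/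
noncomputable def nodeRelC {V : Type*} [Fintype V] (G : SimpleGraph V) (p : ℂ) : ℂ :=
  ∑ S ∈ Finset.univ.filter fun S : Finset V => (G.induce (S : Set V)).Connected,
    p ^ S.card * (1 - p) ^ (Fintype.card V - S.card)

/-!
In a complete bipartite graph, a vertex set meeting both sides induces a connected subgraph, and one
missing a side induces a subgraph without edges, which is connected only on a single vertex. So the
connected sets are the singletons and the sets meeting both sides. As the weight of a vertex set is
the product of the weights of its traces on the two sides, the latter contribute the product of two
binomial sums, each missing the term of the empty set.
-/

open Finset

section ConnectedSets

variable {V W : Type*}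

lemma connected_induce_completeBipartiteGraph {s : Set (V ⊕ W)} {v : V} {w : W}
    (hv : .inl v ∈ s) (hw : .inr w ∈ s) : ((completeBipartiteGraph V W).induce s).Connected := by
  have reachable_inl (x : s) :
      ((completeBipartiteGraph V W).induce s).Reachable ⟨.inl v, hv⟩ x := by
    obtain ⟨x | x, hx⟩ := x
    · have hvw : ((completeBipartiteGraph V W).induce s).Adj ⟨.inl v, hv⟩ ⟨.inr w, hw⟩ := by simp
      have hwx : ((completeBipartiteGraph V W).induce s).Adj ⟨.inr w, hw⟩ ⟨.inl x, hx⟩ := by simp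
      exact hvw.reachable.trans hwx.reachable
    · exact SimpleGraph.Adj.reachable (by simp)
  exact (SimpleGraph.connected_iff_exists_forall_reachable _).2 ⟨_, reachable_inl⟩

lemma induce_completeBipartiteGraph_eq_bot_iff {s : Set (V ⊕ W)} :
    (completeBipartiteGraph V W).induce s = ⊥ ↔ ∀ v w, .inl v ∈ s → .inr w ∉ s := by
  simp only [SimpleGraph.eq_bot_iff_forall_not_adj, SimpleGraph.comap_adj]
  constructor
  · intro h v w hv hw
    exact h ⟨.inl v, hv⟩ ⟨.inr w, hw⟩ (by simp)
  · rintro h ⟨x | x, hx⟩ ⟨y | y, hy⟩ hadj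
    · simp at hadj
    · exact h x y hx hy
    · exact h y x hy hx
    · simp at hadj

lemma connected_induce_completeBipartiteGraph_iff {S : Finset (V ⊕ W)} :
    ((completeBipartiteGraph V W).induce (S : Set (V ⊕ W))).Connected ↔
      S.card = 1 ∨ (S.toLeft.Nonempty ∧ S.toRight.Nonempty) := by
  by_cases hS : S.toLeft.Nonempty ∧ S.toRight.Nonempty
  · obtain ⟨⟨v, hv⟩, ⟨w, hw⟩⟩ := hS
    exact iff_of_true
      (connected_induce_completeBipartiteGraph (by simpa using hv) (by simpa using hw))
      (.inr ⟨⟨v, hv⟩, ⟨w, hw⟩⟩)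
  · have hbot : (completeBipartiteGraph V W).induce (S : Set (V ⊕ W)) = ⊥ :=
      induce_completeBipartiteGraph_eq_bot_iff.2 fun v w hv hw ↦
        hS ⟨⟨v, by simpa using hv⟩, ⟨w, by simpa using hw⟩⟩
    rw [hbot, SimpleGraph.connected_bot_iff, ← Nat.card_eq_one_iff_unique, or_iff_left hS]
    simp

lemma disjoint_card_eq_one_toLeft_toRight_nonempty :
    Disjoint (fun S : Finset (V ⊕ W) ↦ S.card = 1)
      (fun S ↦ S.toLeft.Nonempty ∧ S.toRight.Nonempty) := by
  simp only [Pi.disjoint_iff, Prop.disjoint_iff]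
  rintro S ⟨hone, hleft, hright⟩
  have := S.card_toLeft_add_card_toRight
  have := hleft.card_pos
  have := hright.card_pos
  omega

end ConnectedSets

section SubsetWeight

variable {V W R : Type*} [Fintype V] [Fintype W]

/-- The weight `a ^ |S| * b ^ (|V| - |S|)` of a set `S` of vertices. For `b = 1 - a` it is the
probability that `S` is exactly the set of operational vertices, when each vertex is operational
independently with probability `a`. -/
def subsetWeight [CommSemiring R] (a b : R) (S : Finset V) : R :=
  a ^ S.card * b ^ (Fintype.card V - S.card)

lemma sum_subsetWeight_card_eq [CommSemiring R] (a b : R) (k : ℕ) :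
    ∑ S : Finset V with S.card = k, subsetWeight a b S =
      (Fintype.card V).choose k * (a ^ k * b ^ (Fintype.card V - k)) := by
  have weight_eq : ∀ S ∈ ({S | S.card = k} : Finset (Finset V)),
      subsetWeight a b S = a ^ k * b ^ (Fintype.card V - k) := by
    intro S hS
    rw [subsetWeight, (mem_filter.1 hS).2]
  rw [sum_congr rfl weight_eq, sum_const, univ_filter_card_eq, card_powersetCard, card_univ,
    nsmul_eq_mul]

lemma sum_subsetWeight_nonempty [CommRing R] (a b : R) :
    ∑ S : Finset V with S.Nonempty, subsetWeight a b S =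
      (a + b) ^ Fintype.card V - b ^ Fintype.card V := by
  have filter_nonempty : ({S | S.Nonempty} : Finset (Finset V)) = univ.erase ∅ := by
    ext S
    simp [nonempty_iff_ne_empty]
  rw [filter_nonempty, sum_erase_eq_sub (mem_univ _), ← Fintype.sum_pow_mul_eq_add_pow V a b]
  simp [subsetWeight]

lemma subsetWeight_disjSum [CommSemiring R] (a b : R) (A : Finset V) (B : Finset W) :
    subsetWeight a b (A.disjSum B) = subsetWeight a b A * subsetWeight a b B := by
  have card_sub : Fintype.card (V ⊕ W) - (A.disjSum B).card =
      (Fintype.card V - A.card) + (Fintype.card W - B.card) := by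
    have := A.card_le_univ
    have := B.card_le_univ
    rw [Fintype.card_sum, card_disjSum]
    omega
  rw [subsetWeight, card_sub, card_disjSum, pow_add, pow_add, mul_mul_mul_comm, subsetWeight,
    subsetWeight]

lemma sum_subsetWeight_toLeft_and_toRight [CommSemiring R] (a b : R)
    (P : Finset V → Prop) (Q : Finset W → Prop) [DecidablePred P] [DecidablePred Q] :
    ∑ S : Finset (V ⊕ W) with P S.toLeft ∧ Q S.toRight, subsetWeight a b S =
      (∑ A with P A, subsetWeight a b A) * ∑ B with Q B, subsetWeight a b B := by
  rw [sum_mul_sum, ← sum_product']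
  refine sum_equiv sumEquiv.toEquiv (fun S ↦ by simp [sumEquiv]) fun S _ ↦ ?_
  simp [sumEquiv, ← subsetWeight_disjSum, toLeft_disjSum_toRight]

end SubsetWeight

theorem nodeRel_completeBipartite_general {V W : Type*} [Fintype V] [Fintype W] (p : ℂ) :
    nodeRelC (completeBipartiteGraph V W) p =
      (Fintype.card V + Fintype.card W) * p * (1 - p) ^ (Fintype.card V + Fintype.card W - 1) +
        (1 - (1 - p) ^ Fintype.card V) * (1 - (1 - p) ^ Fintype.card W) := by
  have nodeRelC_eq_add : nodeRelC (completeBipartiteGraph V W) p =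
      ∑ S : Finset (V ⊕ W) with S.card = 1, subsetWeight p (1 - p) S +
        ∑ S : Finset (V ⊕ W) with S.toLeft.Nonempty ∧ S.toRight.Nonempty,
          subsetWeight p (1 - p) S := by
    rw [← sum_union (disjoint_filter_filter' _ _ disjoint_card_eq_one_toLeft_toRight_nonempty),
      ← filter_or]
    simp only [nodeRelC, connected_induce_completeBipartiteGraph_iff, subsetWeight]
  rw [nodeRelC_eq_add, sum_subsetWeight_card_eq,
    sum_subsetWeight_toLeft_and_toRight _ _ Finset.Nonempty Finset.Nonempty,
    sum_subsetWeight_nonempty, sum_subsetWeight_nonempty, add_sub_cancel, one_pow, one_pow]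
  simp [mul_assoc]

/-- The node reliability polynomial of the complete bipartite graph K_{n,n} is
`2np(1-p)^(2n-1) + (1-(1-p)^n)^2`. -/
theorem nodeRel_completeBipartite (n : ℕ) (hn : 1 ≤ n) (p : ℂ) :
    nodeRelC (completeBipartiteGraph (Fin n) (Fin n)) p =
      2 * n * p * (1 - p) ^ (2 * n - 1) + (1 - (1 - p) ^ n) ^ 2 := by
  simpa only [Fintype.card_fin, ← two_mul, ← sq] using
    nodeRel_completeBipartite_general (V := Fin n) (W := Fin n) p
end

section
/- For every natural number k, the connected set polynomial of the disjoint union of K_3 with k copies of K_2 equals C(K_3 ∪ kK_2; x) = x³ + (3 + k)x² + (3 + 2k)x = x(x² + (3+k)x + (3+2k)), and for every k ≥ 3 this polynomial has all real roots (every complex root of it is real). -/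
open scoped Classical

/-- The disjoint union of K_3 (the left summand) with k copies of K_2 (the right
summand: for each i : Fin k, the pair (i,0), (i,1) forms an edge). -/
def K3UnionKK2 (k : ℕ) : SimpleGraph (Fin 3 ⊕ (Fin k × Fin 2)) :=
  SimpleGraph.fromRel fun p q =>
    (∃ u v : Fin 3, p = Sum.inl u ∧ q = Sum.inl v) ∨
    (∃ i u v, p = Sum.inr (i, u) ∧ q = Sum.inr (i, v))

/-!
Every connected set lies inside a single component, so `C` is additive over any splitting of the
vertices that no edge crosses. In the complete graph on `n` vertices all nonempty sets are
connected, whence `C(K_n; x) = (1 + x)^n - 1`, and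
`C(K_3 ∪ kK_2; x) = ((1 + x)^3 - 1) + k ((1 + x)^2 - 1)`.
Dividing by `x` leaves the quadratic `x^2 + (3 + k) x + (3 + 2k)`, of discriminant
`(3 + k)^2 - 4 (3 + 2k) = (k - 3) (k + 1)`.
-/

section ConnectedSets

variable {V W ι : Type*} {G : SimpleGraph V} {H : SimpleGraph W}

theorem eq_of_reachable_of_forall_adj {f : V → ι} (hf : ∀ u v, G.Adj u v → f u = f v) {u v : V}
    (h : G.Reachable u v) : f u = f v := by
  obtain ⟨p⟩ := h
  induction p with
  | nil => rfl
  | cons huv _ ih => exact (hf _ _ huv).trans ih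

theorem connected_induce_image_iff (e : H ↪g G) (s : Set W) :
    (G.induce (e '' s)).Connected ↔ (H.induce s).Connected :=
  let φ : H.induce s ≃g G.induce (e '' s) := ⟨Equiv.Set.image e s e.injective, e.map_adj_iff⟩
  φ.connected_iff.symm

theorem exists_forall_subset_fiber_iff_eq {f : V → ι} (hf : ∀ u v, G.Adj u v → f u = f v)
    {s : Set V} (hs : (G.induce s).Connected) : ∃ i₀, ∀ i, s ⊆ f ⁻¹' {i} ↔ i₀ = i := by
  obtain ⟨v⟩ := hs.nonempty
  refine ⟨f v, fun i => ⟨fun h => h v.2, ?_⟩⟩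
  rintro rfl u hu
  exact eq_of_reachable_of_forall_adj (f := fun w : s => f w) (fun _ _ => hf _ _)
    (hs.preconnected ⟨u, hu⟩ v)

end ConnectedSets

section ConnectedSetPolynomial

variable {V W ι : Type*} [Fintype V] [Fintype W] [Fintype ι]

/-- The connected sets of `G`, of all orders: the family over which `connPoly G x` sums
`x ^ S.card`. -/
noncomputable def connSets (G : SimpleGraph V) : Finset (Finset V) :=
  {S | (G.induce (S : Set V)).Connected}

theorem mem_connSets {G : SimpleGraph V} {S : Finset V} :
    S ∈ connSets G ↔ (G.induce (S : Set V)).Connected := by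
  simp only [connSets, Finset.mem_filter_univ]

theorem nonempty_of_mem_connSets {G : SimpleGraph V} {S : Finset V} (hS : S ∈ connSets G) :
    S.Nonempty :=
  Set.nonempty_coe_sort.1 (mem_connSets.1 hS).nonempty

theorem connCount_eq_card_filter_connSets (G : SimpleGraph V) (k : ℕ) :
    connCount G k = {S ∈ connSets G | S.card = k}.card := by
  simp only [connCount, connSets, Finset.filter_filter, and_comm]

theorem connPoly_eq_sum_connSets (G : SimpleGraph V) (x : ℂ) :
    connPoly G x = ∑ S ∈ connSets G, x ^ S.card := by
  have card_mem : ∀ S ∈ connSets G, S.card ∈ Finset.Icc 1 (Fintype.card V) := fun S hS =>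
    Finset.mem_Icc.2 ⟨(nonempty_of_mem_connSets hS).card_pos, S.card_le_univ⟩
  simp only [← Finset.sum_fiberwise_of_maps_to' card_mem (x ^ ·), connPoly,
    connCount_eq_card_filter_connSets, Finset.sum_const, nsmul_eq_mul]

theorem connSets_top : connSets (⊤ : SimpleGraph V) = Finset.univ.erase ∅ := by
  ext S
  simp only [mem_connSets, SimpleGraph.induce_top, SimpleGraph.connected_top_iff, Finset.mem_erase,
    Finset.mem_univ, and_true, ← Finset.nonempty_iff_ne_empty, Finset.coe_sort_coe,
    Finset.nonempty_coe_sort]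

theorem connPoly_top (x : ℂ) :
    connPoly (⊤ : SimpleGraph V) x = (x + 1) ^ Fintype.card V - 1 := by
  have binomial : ∑ S : Finset V, x ^ S.card = (x + 1) ^ Fintype.card V := by
    simpa using Fintype.sum_pow_mul_eq_add_pow V x 1
  rw [connPoly_eq_sum_connSets, connSets_top, Finset.sum_erase_eq_sub (Finset.mem_univ _),
    binomial, Finset.card_empty, pow_zero]

theorem map_mem_connSets {G : SimpleGraph V} {H : SimpleGraph W} (e : H ↪g G) (T : Finset W) :
    T.map e.toEmbedding ∈ connSets G ↔ T ∈ connSets H := by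
  rw [mem_connSets, mem_connSets, Finset.coe_map]
  exact connected_induce_image_iff e T

theorem map_connSets {G : SimpleGraph V} {H : SimpleGraph W} (e : H ↪g G) :
    (connSets H).map (Finset.mapEmbedding e.toEmbedding).toEmbedding =
      {S ∈ connSets G | S ⊆ Finset.univ.map e.toEmbedding} := by
  ext S
  simp only [Finset.mem_map, Finset.mem_filter, Finset.subset_map_iff]
  constructor
  · rintro ⟨T, hT, rfl⟩
    exact ⟨(map_mem_connSets e T).2 hT, T, T.subset_univ, rfl⟩
  · rintro ⟨hS, T, -, rfl⟩
    exact ⟨T, (map_mem_connSets e T).1 hS, rfl⟩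

theorem connPoly_induce (G : SimpleGraph V) (s : Set V) [Fintype s] (x : ℂ) :
    connPoly (G.induce s) x = ∑ S ∈ connSets G with S ⊆ s.toFinset, x ^ S.card := by
  let e : G.induce s ↪g G := SimpleGraph.Embedding.induce s
  have map_univ : Finset.univ.map e.toEmbedding = s.toFinset := rfl
  rw [connPoly_eq_sum_connSets, ← map_univ, ← map_connSets, Finset.sum_map]
  simp only [RelEmbedding.coe_toEmbedding, Finset.mapEmbedding_apply, Finset.card_map]

theorem connPoly_eq_sum_induce_fiber {G : SimpleGraph V} {f : V → ι}
    (hf : ∀ u v, G.Adj u v → f u = f v) (x : ℂ) :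
    connPoly G x = ∑ i, connPoly (G.induce (f ⁻¹' {i})) x := by
  simp only [connPoly_induce, Finset.sum_filter]
  rw [Finset.sum_comm, connPoly_eq_sum_connSets]
  refine Finset.sum_congr rfl fun S hS => ?_
  obtain ⟨i₀, hi₀⟩ := exists_forall_subset_fiber_iff_eq hf (mem_connSets.1 hS)
  simp only [Set.subset_toFinset, hi₀, Finset.sum_ite_eq, Finset.mem_univ, if_true]

theorem connPoly_eq_sum_of_adj_iff [DecidableEq ι] {G : SimpleGraph V} {f : V → ι}
    (hG : ∀ u v, G.Adj u v ↔ u ≠ v ∧ f u = f v) (x : ℂ) :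
    connPoly G x = ∑ i, ((x + 1) ^ Finset.card {v | f v = i} - 1) := by
  have induce_fiber (i : ι) : G.induce (f ⁻¹' {i}) = ⊤ :=
    SimpleGraph.induce_eq_top.2 fun u hu v hv huv => (hG u v).2 ⟨huv, hu.trans hv.symm⟩
  have card_fiber (i : ι) : Fintype.card (f ⁻¹' {i}) = Finset.card {v | f v = i} :=
    Fintype.card_of_subtype _ fun v => by simp
  rw [connPoly_eq_sum_induce_fiber fun u v huv => ((hG u v).1 huv).2]
  simp only [induce_fiber, connPoly_top, card_fiber]

end ConnectedSetPolynomial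

theorem im_eq_zero_of_quadratic_eq_zero {a b c : ℝ} (ha : a ≠ 0) (hd : 0 ≤ discrim a b c) {z : ℂ}
    (hz : a * (z * z) + b * z + c = 0) : z.im = 0 := by
  have sqrt_discrim : discrim (a : ℂ) b c = (√(discrim a b c) : ℂ) * √(discrim a b c) := by
    rw [← Complex.ofReal_mul, Real.mul_self_sqrt hd]
    simp [discrim]
  have ha' : (a : ℂ) ≠ 0 := Complex.ofReal_ne_zero.2 ha
  rcases (quadratic_eq_zero_iff ha' sqrt_discrim z).1 hz with rfl | rfl <;> norm_cast

namespace K3UnionKK2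

variable {k : ℕ}

/-- The component of `K3UnionKK2 k` containing a vertex: `none` is the triangle and `some i` the
`i`-th edge. -/
def component : Fin 3 ⊕ (Fin k × Fin 2) → Option (Fin k) :=
  Sum.elim (fun _ => none) fun p => some p.1

theorem adj_iff (p q : Fin 3 ⊕ (Fin k × Fin 2)) :
    (K3UnionKK2 k).Adj p q ↔ p ≠ q ∧ component p = component q := by
  rw [K3UnionKK2, SimpleGraph.fromRel_adj]
  refine and_congr_right fun _ => ?_
  rcases p with u | ⟨i, u⟩ <;> rcases q with v | ⟨j, v⟩ <;>
    simp [component, -Fin.exists_fin_two, eq_comm]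

theorem card_component_eq_none :
    Finset.card {v | component (k := k) v = none} = 3 := by
  rw [Finset.card_filter, Fintype.sum_sum_type]
  simp [component]

theorem card_component_eq_some (i : Fin k) :
    Finset.card {v | component v = some i} = 2 := by
  rw [Finset.card_filter, Fintype.sum_sum_type, Fintype.sum_prod_type]
  simp [component]

theorem connPoly_eq (k : ℕ) (x : ℂ) :
    connPoly (K3UnionKK2 k) x = ((x + 1) ^ 3 - 1) + k * ((x + 1) ^ 2 - 1) := by
  simp only [connPoly_eq_sum_of_adj_iff adj_iff, Fintype.sum_option, card_component_eq_none,
    card_component_eq_some, Finset.sum_const, Finset.card_univ, Fintype.card_fin, nsmul_eq_mul]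

theorem connPoly_eq_mul (k : ℕ) (x : ℂ) :
    connPoly (K3UnionKK2 k) x = x * (x ^ 2 + (3 + (k : ℂ)) * x + (3 + 2 * (k : ℂ))) := by
  rw [connPoly_eq]
  ring

theorem discrim_nonneg {t : ℝ} (ht : 3 ≤ t) : 0 ≤ discrim 1 (3 + t) (3 + 2 * t) :=
  calc
    0 ≤ (t - 3) * (t + 1) := mul_nonneg (by linarith) (by linarith)
    _ = discrim 1 (3 + t) (3 + 2 * t) := by rw [discrim]; ring

theorem im_eq_zero_of_connPoly_eq_zero (hk : 3 ≤ k) {z : ℂ}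
    (hz : connPoly (K3UnionKK2 k) z = 0) : z.im = 0 := by
  rw [connPoly_eq_mul] at hz
  rcases mul_eq_zero.1 hz with rfl | quadratic
  · exact Complex.zero_im
  · refine im_eq_zero_of_quadratic_eq_zero one_ne_zero
      (discrim_nonneg (t := k) (by exact_mod_cast hk)) ?_
    push_cast
    linear_combination quadratic

end K3UnionKK2

/-- The connected set polynomial of K_3 ∪ kK_2 equals
x^3 + (3+k)x^2 + (3+2k)x = x(x^2 + (3+k)x + (3+2k)), and for k ≥ 3 all of its complex
roots are real. -/
theorem connPoly_K3UnionKK2 (k : ℕ) :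
    (∀ x : ℂ, connPoly (K3UnionKK2 k) x =
      x ^ 3 + (3 + (k : ℂ)) * x ^ 2 + (3 + 2 * (k : ℂ)) * x ∧
      connPoly (K3UnionKK2 k) x =
        x * (x ^ 2 + (3 + (k : ℂ)) * x + (3 + 2 * (k : ℂ)))) ∧
    (3 ≤ k → ∀ z : ℂ, connPoly (K3UnionKK2 k) z = 0 → z.im = 0) := by
  refine ⟨fun x => ⟨?_, K3UnionKK2.connPoly_eq_mul k x⟩,
    fun hk _ hz => K3UnionKK2.im_eq_zero_of_connPoly_eq_zero hk hz⟩
  rw [K3UnionKK2.connPoly_eq_mul]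
  ring
end
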